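/- Let k ≥ 2 and let y₁, …, y_k be nonnegative real numbers. Assume that for some N with 1 ≤ N < k one has y₁ + ⋯ + y_N = y_{N+1} + ⋯ + y_k. Then there exist a natural number l < k, nonnegative real numbers x₁, …, x_l each lying in the ℚ-linear span of {y₁, …, y_k}, and natural numbers Z_{ij} (1 ≤ i ≤ k, 1 ≤ j ≤ l) such that y_i = ∑_{j=1}^{l} Z_{ij}·x_j for every i = 1, …, k. -/

import Mathlib

/-- Common refinement of two lists with equal sums (north-west corner rule). -/
theorem refine_aux (V : Submodule ℚ ℝ) (n : ℕ) : ∀ a b : List ℝ, a.length + b.length = n →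
    a ≠ [] → b ≠ [] → (∀ z ∈ a, 0 ≤ z ∧ z ∈ V) → (∀ z ∈ b, 0 ≤ z ∧ z ∈ V) → a.sum = b.sum →
    ∃ X : List ℝ, X.length < n ∧ (∀ z ∈ X, 0 ≤ z ∧ z ∈ V) ∧
      (∀ z ∈ a, z ∈ Submodule.span ℕ {x | x ∈ X}) ∧
      (∀ z ∈ b, z ∈ Submodule.span ℕ {x | x ∈ X}) := by
  induction n with
  | zero =>
    intro a b h ha
    simp_all
  | succ n ih =>
    have key : ∀ (s t : ℝ) (a b : List ℝ), s ≤ t → (s :: a).length + (t :: b).length = n + 1 →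
        (∀ z ∈ s :: a, 0 ≤ z ∧ z ∈ V) → (∀ z ∈ t :: b, 0 ≤ z ∧ z ∈ V) →
        (s :: a).sum = (t :: b).sum →
        ∃ X : List ℝ, X.length < n + 1 ∧ (∀ z ∈ X, 0 ≤ z ∧ z ∈ V) ∧
          (∀ z ∈ s :: a, z ∈ Submodule.span ℕ {x | x ∈ X}) ∧
          (∀ z ∈ t :: b, z ∈ Submodule.span ℕ {x | x ∈ X}) := by
      intro s t a b hst hlen ha hb hsum
      by_cases hane : a = []
      · subst hane
        have hm : ∀ z ∈ t :: b, z ∈ Submodule.span ℕ {x | x ∈ t :: b} :=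
          fun z hz => Submodule.subset_span hz
        refine ⟨t :: b, ?_, hb, ?_, hm⟩
        · simp at hlen ⊢
          omega
        · intro z hz
          have hz' : z = (t :: b).sum := by
            rw [← hsum]
            simpa using hz
          rw [hz']
          exact list_sum_mem hm
      · have hs := ha s (by simp)
        have ht := hb t (by simp)
        obtain ⟨X, hX, hXV, hXa, hXb⟩ := ih a ((t - s) :: b) (by simp at hlen ⊢; omega) hane
          (by simp) (fun z hz => ha z (by simp [hz])) (by
            intro z hz
            rcases List.mem_cons.1 hz with rfl | hz
            · exact ⟨sub_nonneg.2 hst, V.sub_mem ht.2 hs.2⟩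
            · exact hb z (by simp [hz])) (by
            simp only [List.sum_cons] at hsum ⊢
            linarith)
        have hle : Submodule.span ℕ {x | x ∈ X} ≤ Submodule.span ℕ {x | x ∈ s :: X} :=
          Submodule.span_mono (fun x hx => List.mem_cons_of_mem _ hx)
        have hsm : s ∈ Submodule.span ℕ {x | x ∈ s :: X} :=
          Submodule.subset_span (by simp)
        refine ⟨s :: X, by simpa using hX, ?_, ?_, ?_⟩
        · intro z hz
          rcases List.mem_cons.1 hz with rfl | hz
          · exact hs
          · exact hXV z hz
        · intro z hz
          rcases List.mem_cons.1 hz with rfl | hz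
          · exact hsm
          · exact hle (hXa z hz)
        · intro z hz
          rcases List.mem_cons.1 hz with rfl | hz
          · have h := Submodule.add_mem _ hsm (hle (hXb (z - s) (by simp)))
            simpa using h
          · exact hle (hXb z (by simp [hz]))
    intro a b hlen hane hbne ha hb hsum
    obtain ⟨s, a, rfl⟩ := List.exists_cons_of_ne_nil hane
    obtain ⟨t, b, rfl⟩ := List.exists_cons_of_ne_nil hbne
    rcases le_total s t with hst | hst
    · exact key s t a b hst hlen ha hb hsum
    · obtain ⟨X, h1, h2, h3, h4⟩ := key t s b a hst (by omega) hb ha hsum.symm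
      exact ⟨X, h1, h2, h4, h3⟩

/-- Let k ≥ 2 and let y₁, …, y_k be nonnegative real numbers. Assume that for
some N with 1 ≤ N < k one has y₁ + ⋯ + y_N = y_{N+1} + ⋯ + y_k. Then there exist a natural
number l < k, nonnegative real numbers x₁, …, x_l each lying in the ℚ-linear span of
{y₁, …, y_k}, and natural numbers Z_{ij} such that y_i = ∑_{j} Z_{ij}·x_j for every i. -/
theorem stmt_0 (k : ℕ) (hk : 2 ≤ k) (y : Fin k → ℝ) (hy : ∀ i, 0 ≤ y i)
    (N : ℕ) (hN1 : 1 ≤ N) (hNk : N < k)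
    (hsum : ∑ i ∈ Finset.univ.filter (fun i : Fin k => (i : ℕ) < N), y i
          = ∑ i ∈ Finset.univ.filter (fun i : Fin k => N ≤ (i : ℕ)), y i) :
    ∃ l : ℕ, l < k ∧ ∃ (x : Fin l → ℝ) (Z : Fin k → Fin l → ℕ),
      (∀ j, 0 ≤ x j ∧ x j ∈ Submodule.span ℚ (Set.range y)) ∧
      (∀ i, y i = ∑ j, (Z i j : ℝ) * x j) := by
  have hmem : ∀ (S : Finset (Fin k)), ∀ z ∈ S.toList.map y,
      0 ≤ z ∧ z ∈ Submodule.span ℚ (Set.range y) := by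
    intro S z hz
    obtain ⟨i, -, rfl⟩ := List.mem_map.1 hz
    exact ⟨hy i, Submodule.subset_span ⟨i, rfl⟩⟩
  obtain ⟨X, hX, hXV, hXa, hXb⟩ := refine_aux (Submodule.span ℚ (Set.range y)) k
    ((Finset.univ.filter (fun i : Fin k => (i : ℕ) < N)).toList.map y)
    ((Finset.univ.filter (fun i : Fin k => N ≤ (i : ℕ))).toList.map y)
    (by
      have h := Finset.card_filter_add_card_filter_not (s := (Finset.univ : Finset (Fin k)))
        (fun i : Fin k => (i : ℕ) < N)
      simp only [not_lt, Finset.card_univ, Fintype.card_fin] at h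
      simpa only [List.length_map, Finset.length_toList] using h)
    (by
      apply List.ne_nil_of_mem (a := y ⟨0, by omega⟩)
      refine List.mem_map.2 ⟨_, ?_, rfl⟩
      simp
      omega)
    (by
      apply List.ne_nil_of_mem (a := y ⟨N, hNk⟩)
      refine List.mem_map.2 ⟨_, ?_, rfl⟩
      simp)
    (hmem _) (hmem _) (by simpa only [Finset.sum_map_toList] using hsum)
  have hall : ∀ i, ∃ c : Fin X.length → ℕ, ∑ j, c j • X.get j = y i := by
    intro i
    rw [← Submodule.mem_span_range_iff_exists_fun, Set.range_list_get]
    rcases lt_or_ge (i : ℕ) N with h | h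
    · exact hXa _ (List.mem_map.2 ⟨i, by simpa using h, rfl⟩)
    · exact hXb _ (List.mem_map.2 ⟨i, by simpa using h, rfl⟩)
  choose Z hZ using hall
  refine ⟨X.length, hX, X.get, Z, fun j => hXV _ (List.get_mem _ _), fun i => ?_⟩
  rw [← hZ i]
  simp only [nsmul_eq_mul]
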